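/- The series ∑_{n=0}^∞ ζ(2n)/((2n+1)(2n+3)·16^n) equals -9ζ(3)/(16π²) + G/π - 12β(4)/π³, where G is Catalan's constant and β is the Dirichlet beta function. -/

import Mathlib

open Real

noncomputable def dirichletBeta (s : ℕ) : ℝ := ∑' n : ℕ, (-1) ^ n / (2 * (n : ℝ) + 1) ^ s

noncomputable def catalanConst : ℝ := ∑' n : ℕ, (-1) ^ n / (2 * (n : ℝ) + 1) ^ 2

/-!
For `0 < ‖z‖ < 1`, expanding the Mittag-Leffler series of the cotangent into geometric series gives
`∑ ζ(2n) z ^ (2n) = -(π z / 2) cot (π z)`. Put `z = x u` and integrate against `(1 - u²) / 2` over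
`[0, 1]`, which produces the factors `1 / ((2n + 1) (2n + 3))`. By the Riemann-Lebesgue lemma the
formal expansion `cot v = 2 ∑ sin (2 k v)` may be integrated termwise against `u (1 - u²)`, whose
sine integrals are elementary, so the sum is a combination of `∑ sin (2πkx) / k²`,
`∑ cos (2πkx) / k³` and `∑ sin (2πkx) / k⁴`. At `x = 1/4` these are `G`, `-3 ζ(3) / 32` and `β(4)`.
-/

open Filter Topology MeasureTheory HurwitzZeta

section CotangentKernel

theorem tendsto_integral_exp_mul_I_mul_cocompact (g : ℝ → ℂ) :
    Tendsto (fun t : ℝ ↦ ∫ u : ℝ, Complex.exp (t * u * Complex.I) * g u) (cocompact ℝ) (𝓝 0) := by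
  have hc : -(2 * π)⁻¹ ≠ 0 := by simp [pi_ne_zero]
  refine ((Real.tendsto_integral_exp_smul_cocompact g).comp
    (Homeomorph.mulRight₀ _ hc).isClosedEmbedding.tendsto_cocompact).congr fun t ↦
      integral_congr_ae (.of_forall fun u ↦ ?_)
  simp only [Homeomorph.coe_mulRight₀, Circle.smul_def, fourierChar_apply, smul_eq_mul]
  congr 3
  push_cast
  field_simp

theorem tendsto_integral_cos_mul_cocompact {g : ℝ → ℂ} (hg : Integrable g) :
    Tendsto (fun t : ℝ ↦ ∫ u : ℝ, Complex.cos (t * u) * g u) (cocompact ℝ) (𝓝 0) := by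
  have hexp := tendsto_integral_exp_mul_I_mul_cocompact g
  have hexp_neg := hexp.comp (Homeomorph.neg ℝ).isClosedEmbedding.tendsto_cocompact
  have hint (t : ℝ) : Integrable fun u : ℝ ↦ Complex.exp (t * u * Complex.I) * g u :=
    hg.bdd_mul (c := 1) (by fun_prop) (.of_forall fun u ↦ by
      rw [← Complex.ofReal_mul, Complex.norm_exp_ofReal_mul_I])
  have h := (hexp.add hexp_neg).div_const 2
  rw [add_zero, zero_div] at h
  refine h.congr fun t ↦ ?_
  rw [Function.comp_apply, Homeomorph.coe_neg, ← integral_add (hint t) (hint (-t)), ← integral_div]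
  refine integral_congr_ae (.of_forall fun u ↦ ?_)
  simp only [Complex.cos]
  push_cast
  ring_nf

theorem tendsto_intervalIntegral_cos_mul_cocompact {g : ℝ → ℂ} {a b : ℝ}
    (hg : IntervalIntegrable g volume a b) :
    Tendsto (fun t : ℝ ↦ ∫ u in a..b, Complex.cos (t * u) * g u) (cocompact ℝ) (𝓝 0) := by
  have h := tendsto_integral_cos_mul_cocompact
    ((integrable_indicator_iff measurableSet_uIoc).mpr hg.def')
  simpa only [intervalIntegral.intervalIntegral_eq_integral_uIoc, smul_zero,
    ← integral_indicator measurableSet_uIoc, Set.indicator_mul_right] using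
    h.const_smul (if a ≤ b then (1 : ℝ) else -1)

theorem sin_nat_mul_eq_zero {v : ℂ} (hv : Complex.sin v = 0) (n : ℕ) :
    Complex.sin (n * v) = 0 := by
  obtain ⟨m, rfl⟩ := Complex.sin_eq_zero_iff.mp hv
  simpa [mul_assoc] using Complex.sin_int_mul_pi (n * m)

-- At a zero of `sin v` both sides are `0`, because division by zero is `0`.
theorem cot_sub_two_mul_sum_sin (N : ℕ) (v : ℂ) :
    Complex.cot v - 2 * ∑ k ∈ Finset.range N, Complex.sin (2 * k * v) =
      Complex.cos ((2 * N - 1) * v) / Complex.sin v := by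
  by_cases hv : Complex.sin v = 0
  · have hsin (k : ℕ) : Complex.sin (2 * k * v) = 0 := mod_cast sin_nat_mul_eq_zero hv (2 * k)
    simp [Complex.cot, hv, hsin]
  · have hsum : Complex.sin v * ∑ k ∈ Finset.range N, Complex.sin (2 * k * v) =
        Complex.sin (N * v) * Complex.sin ((N - 1) * v) := by
      have := Complex.sin_mul_sum_sin N (2 * v) 0
      ring_nf at this ⊢
      exact this
    have hcos : Complex.cos v - Complex.cos ((2 * N - 1) * v) =
        2 * Complex.sin (N * v) * Complex.sin ((N - 1) * v) := by
      rw [← Complex.cos_neg v, ← neg_sub, Complex.cos_sub_cos]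
      ring_nf
    rw [Complex.cot, eq_div_iff hv, sub_mul, div_mul_cancel₀ _ hv]
    linear_combination hcos - 2 * hsum

variable {f : ℝ → ℂ} {a b c : ℝ}

theorem intervalIntegrable_mul_cot
    (hf : IntervalIntegrable (fun u ↦ f u / Complex.sin (c * u)) volume a b) :
    IntervalIntegrable (fun u ↦ f u * Complex.cot (c * u)) volume a b :=
  (hf.mul_continuousOn (g := fun u : ℝ ↦ Complex.cos (c * u)) (by fun_prop)).congr fun u _ ↦ by
    rw [Complex.cot, div_mul_eq_mul_div, mul_div_assoc]

theorem intervalIntegrable_mul_sin_two_mul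
    (hf : IntervalIntegrable (fun u ↦ f u / Complex.sin (c * u)) volume a b) (k : ℕ) :
    IntervalIntegrable (fun u ↦ f u * Complex.sin (2 * k * (c * u))) volume a b := by
  refine (hf.mul_continuousOn
    (g := fun u : ℝ ↦ Complex.sin (c * u) * Complex.sin (2 * k * (c * u)))
    (by fun_prop)).congr fun u _ ↦ ?_
  by_cases hu : Complex.sin (c * u) = 0
  · have hku : Complex.sin (2 * k * (c * u)) = 0 := mod_cast sin_nat_mul_eq_zero hu (2 * k)
    rw [hku, mul_zero, mul_zero, mul_zero]
  · rw [← mul_assoc, div_mul_cancel₀ _ hu]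

theorem integral_mul_cot_sub_sum_integral_mul_sin
    (hf : IntervalIntegrable (fun u ↦ f u / Complex.sin (c * u)) volume a b) (N : ℕ) :
    (∫ u in a..b, f u * Complex.cot (c * u)) -
        2 * ∑ k ∈ Finset.range N, ∫ u in a..b, f u * Complex.sin (2 * k * (c * u)) =
      ∫ u in a..b, Complex.cos ((2 * N - 1) * (c * u)) * (f u / Complex.sin (c * u)) := by
  have hsin := intervalIntegrable_mul_sin_two_mul hf
  have hsum : IntervalIntegrable
      (fun u ↦ ∑ k ∈ Finset.range N, f u * Complex.sin (2 * k * (c * u))) volume a b := by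
    simpa only [Finset.sum_fn] using IntervalIntegrable.sum (Finset.range N) fun k _ ↦ hsin k
  rw [← intervalIntegral.integral_finsetSum fun k _ ↦ hsin k,
    ← intervalIntegral.integral_const_mul,
    ← intervalIntegral.integral_sub (intervalIntegrable_mul_cot hf) (hsum.const_mul 2)]
  congr 1 with u
  rw [← Finset.mul_sum, mul_div_left_comm, ← cot_sub_two_mul_sum_sin]
  ring

theorem tendsto_two_mul_sum_integral_mul_sin (hc : c ≠ 0)
    (hf : IntervalIntegrable (fun u ↦ f u / Complex.sin (c * u)) volume a b) :
    Tendsto (fun N ↦ 2 * ∑ k ∈ Finset.range N, ∫ u in a..b, f u * Complex.sin (2 * k * (c * u)))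
      atTop (𝓝 (∫ u in a..b, f u * Complex.cot (c * u))) := by
  have hfreq : Tendsto (fun N : ℕ ↦ (2 * N - 1) * c) atTop (cocompact ℝ) :=
    (Homeomorph.mulRight₀ c hc).isClosedEmbedding.tendsto_cocompact.comp <|
      Tendsto.mono_right (tendsto_atTop_add_const_right _ _
        (tendsto_natCast_atTop_atTop.const_mul_atTop two_pos)) atTop_le_cocompact
  have hrem := (tendsto_intervalIntegral_cos_mul_cocompact hf).comp hfreq
  have h := (tendsto_const_nhds (x := ∫ u in a..b, f u * Complex.cot (c * u))).sub hrem
  rw [sub_zero] at h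
  refine h.congr fun N ↦ ?_
  rw [sub_eq_iff_eq_add, ← sub_eq_iff_eq_add', integral_mul_cot_sub_sum_integral_mul_sin hf]
  simp only [Function.comp_apply]
  push_cast
  simp only [mul_assoc]

end CotangentKernel

section CotangentIntegral

theorem sinc_ne_zero {x : ℝ} (hx : |x| < π) : sinc x ≠ 0 := by
  rcases eq_or_ne x 0 with rfl | hx0
  · simp
  · rw [sinc_of_ne_zero hx0]
    obtain ⟨hneg, hpos⟩ := abs_lt.mp hx
    exact div_ne_zero (mt (sin_eq_zero_iff_of_lt_of_lt hneg hpos).mp hx0) hx0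

theorem intervalIntegrable_mul_div_sin {h : ℝ → ℂ} (hh : Continuous h) {c : ℝ} (hc : |c| < π) :
    IntervalIntegrable (fun u : ℝ ↦ u * h u / Complex.sin (c * u)) volume 0 1 := by
  have hsinc : ContinuousOn (fun u ↦ h u / (sinc (c * u) : ℂ)) (Set.uIcc 0 1) := by
    have := continuous_sinc
    refine hh.continuousOn.div (by fun_prop) fun u hu ↦ ?_
    rw [Set.uIcc_of_le zero_le_one] at hu
    refine Complex.ofReal_ne_zero.mpr (sinc_ne_zero ?_)
    rw [abs_mul, abs_of_nonneg hu.1]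
    exact (mul_le_of_le_one_right (abs_nonneg c) hu.2).trans_lt hc
  refine (hsinc.intervalIntegrable.div_const (c : ℂ)).congr fun u hu ↦ ?_
  rw [Set.uIoc_of_le zero_le_one] at hu
  have hu0 : (u : ℂ) ≠ 0 := mod_cast hu.1.ne'
  rcases eq_or_ne c 0 with rfl | hc0
  · simp
  · have hc0' : (c : ℂ) ≠ 0 := mod_cast hc0
    rw [sinc_of_ne_zero (mul_ne_zero hc0 hu.1.ne')]
    push_cast
    field_simp

theorem integral_mul_one_sub_sq_mul_sin {c : ℂ} (hc : c ≠ 0) :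
    ∫ u in (0 : ℝ)..1, (u * (1 - u ^ 2) : ℂ) * Complex.sin (c * u) =
      -2 * Complex.sin c / c ^ 2 - 6 * Complex.cos c / c ^ 3 + 6 * Complex.sin c / c ^ 4 := by
  let F (z : ℂ) : ℂ := (1 - 3 * z ^ 2) * Complex.sin (c * z) / c ^ 2
    + 6 * Complex.sin (c * z) / c ^ 4 - z * (1 - z ^ 2) * Complex.cos (c * z) / c
    - 6 * z * Complex.cos (c * z) / c ^ 3
  have hF (z : ℂ) : HasDerivAt F (z * (1 - z ^ 2) * Complex.sin (c * z)) z := by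
    have hz := hasDerivAt_id' z
    have hcz : HasDerivAt (fun z ↦ c * z) c z := by simpa using hz.const_mul c
    convert! ((((((hz.pow 2).const_mul 3).const_sub 1).mul hcz.csin).div_const (c ^ 2)).add
      ((hcz.csin.const_mul 6).div_const (c ^ 4))).sub
      (((hz.mul ((hz.pow 2).const_sub 1)).mul hcz.ccos).div_const c) |>.sub
      (((hz.const_mul 6).mul hcz.ccos).div_const (c ^ 3)) using 1
    simp only [Nat.cast_ofNat, Nat.add_one_sub_one, pow_one, Pi.pow_apply, Pi.mul_apply]
    field_simp
    ring
  rw [intervalIntegral.integral_eq_sub_of_hasDerivAt (f := fun u : ℝ ↦ F u)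
    (fun u _ ↦ (hF u).comp_ofReal) (Continuous.intervalIntegrable (by fun_prop) _ _)]
  simp only [F, Complex.ofReal_one, Complex.ofReal_zero, mul_one, mul_zero, Complex.sin_zero]
  ring

theorem hasSum_sin_div_pow (x : ℝ) {s : ℕ} (hs : 1 < s) :
    HasSum (fun k : ℕ ↦ Complex.sin (2 * k * (π * x)) / k ^ s) (sinZeta x s) := by
  have h := hasSum_nat_sinZeta x (s := s) (by simpa)
  simp only [Complex.cpow_natCast] at h
  push_cast at h
  exact h.congr_fun fun k ↦ by ring_nf

theorem hasSum_cos_div_pow (x : ℝ) {s : ℕ} (hs : 1 < s) :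
    HasSum (fun k : ℕ ↦ Complex.cos (2 * k * (π * x)) / k ^ s) (cosZeta x s) := by
  have h := hasSum_nat_cosZeta x (s := s) (by simpa)
  simp only [Complex.cpow_natCast] at h
  push_cast at h
  exact h.congr_fun fun k ↦ by ring_nf

theorem integral_mul_one_sub_sq_mul_cot {x : ℝ} (hx0 : x ≠ 0) (hx1 : |x| < 1) :
    ∫ u in (0 : ℝ)..1, (u * (1 - u ^ 2) : ℂ) * Complex.cot (π * x * u) =
      -sinZeta x 2 / (π * x) ^ 2 - 3 * cosZeta x 3 / (2 * (π * x) ^ 3)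
        + 3 * sinZeta x 4 / (4 * (π * x) ^ 4) := by
  have hc : |π * x| < π := by
    rw [abs_mul, abs_of_pos pi_pos]
    exact mul_lt_of_lt_one_right pi_pos hx1
  have hlim := tendsto_two_mul_sum_integral_mul_sin (mul_ne_zero pi_ne_zero hx0)
    (intervalIntegrable_mul_div_sin (h := fun u ↦ 1 - u ^ 2) (by fun_prop) hc)
  have hsum := (((hasSum_sin_div_pow x one_lt_two).mul_left (-1 / (π * x : ℂ) ^ 2)).sub
    ((hasSum_cos_div_pow x (s := 3) (by norm_num)).mul_left (3 / (2 * (π * x : ℂ) ^ 3)))).add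
    ((hasSum_sin_div_pow x (s := 4) (by norm_num)).mul_left (3 / (4 * (π * x : ℂ) ^ 4)))
  have hcoeff (k : ℕ) : 2 * ∫ u in (0 : ℝ)..1,
      (u * (1 - u ^ 2) : ℂ) * Complex.sin (2 * k * ((π * x : ℝ) * u)) =
        -1 / (π * x) ^ 2 * (Complex.sin (2 * k * (π * x)) / k ^ 2)
          - 3 / (2 * (π * x) ^ 3) * (Complex.cos (2 * k * (π * x)) / k ^ 3)
          + 3 / (4 * (π * x) ^ 4) * (Complex.sin (2 * k * (π * x)) / k ^ 4) := by
    rcases eq_or_ne k 0 with rfl | hk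
    · simp
    · have hπx : (π * x : ℂ) ≠ 0 := mod_cast mul_ne_zero pi_ne_zero hx0
      have hk' : (k : ℂ) ≠ 0 := Nat.cast_ne_zero.mpr hk
      push_cast
      simp only [← mul_assoc (2 * (k : ℂ)) (π * x : ℂ)]
      rw [integral_mul_one_sub_sq_mul_sin (mul_ne_zero (mul_ne_zero two_ne_zero hk') hπx)]
      generalize (π * x : ℂ) = y at *
      field_simp
      ring
  simp only [Finset.mul_sum, hcoeff] at hlim
  have h := tendsto_nhds_unique hlim hsum.tendsto_sum_nat
  push_cast at h
  rw [h]
  ring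

end CotangentIntegral

section ZetaGeneratingFunction

theorem mem_integerComplement_of_norm_lt_one {z : ℂ} (hz0 : z ≠ 0) (hz : ‖z‖ < 1) :
    z ∈ Complex.integerComplement := by
  rintro ⟨n, rfl⟩
  rw [Complex.norm_intCast] at hz
  exact hz0 (mod_cast Int.abs_lt_one_iff.mp (mod_cast hz))

theorem tsum_sq_div_sq_sub_sq_eq_cot {z : ℂ} (hz : z ∈ Complex.integerComplement) :
    ∑' k : ℕ, z ^ 2 / ((k + 1) ^ 2 - z ^ 2) = (1 - π * z * Complex.cot (π * z)) / 2 := by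
  have hterm (k : ℕ) : z ^ 2 / ((k + 1) ^ 2 - z ^ 2) =
      -(z / 2) * (1 / (z - (k + 1)) + 1 / (z + (k + 1))) := by
    have hsub : z - (k + 1) ≠ 0 := by
      simpa [sub_eq_add_neg] using Complex.integerComplement_add_ne_zero hz (-(k + 1))
    have hadd : z + (k + 1) ≠ 0 := by
      simpa using Complex.integerComplement_add_ne_zero hz (k + 1)
    have hsq : ((k : ℂ) + 1) ^ 2 - z ^ 2 = -((z - (k + 1)) * (z + (k + 1))) := by ring
    rw [hsq]
    field_simp
    ring
  have hz0 := Complex.integerComplement.ne_zero hz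
  rw [tsum_congr hterm, tsum_mul_left, ← cot_series_rep' hz]
  field_simp
  ring

theorem hasSum_one_div_nat_pow {s : ℕ} (hs : 1 < s) :
    HasSum (fun k : ℕ ↦ 1 / (k : ℂ) ^ s) (riemannZeta s) := by
  rw [zeta_nat_eq_tsum_of_gt_one hs]
  exact (Summable.of_norm (by simpa using Real.summable_nat_pow_inv.mpr hs)).hasSum

theorem hasSum_one_div_nat_add_one_pow {s : ℕ} (hs : 1 < s) :
    HasSum (fun k : ℕ ↦ 1 / ((k : ℂ) + 1) ^ s) (riemannZeta s) := by
  have hs0 : s ≠ 0 := by lia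
  simpa [hs0] using (hasSum_nat_add_iff' 1).mpr (hasSum_one_div_nat_pow hs)

theorem summable_sq_div_sq_pow {z : ℂ} (hz : ‖z‖ < 1) :
    Summable fun p : ℕ × ℕ ↦ (z ^ 2 / ((p.2 : ℂ) + 1) ^ 2) ^ (p.1 + 1) := by
  have hgeom : Summable fun n : ℕ ↦ (‖z‖ ^ 2) ^ (n + 1) :=
    (summable_nat_add_iff 1).mpr
      (summable_geometric_of_lt_one (by positivity) (pow_lt_one₀ (norm_nonneg z) hz two_ne_zero))
  have hsq : Summable fun k : ℕ ↦ ((k + 1 : ℝ) ^ 2)⁻¹ :=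
    mod_cast (summable_nat_add_iff 1).mpr (summable_nat_pow_inv.mpr one_lt_two)
  refine Summable.of_norm_bounded (hgeom.mul_of_nonneg hsq (fun _ ↦ by positivity)
    (fun _ ↦ by positivity)) fun ⟨n, k⟩ ↦ ?_
  have hk : ‖(k : ℂ) + 1‖ = k + 1 := mod_cast Complex.norm_natCast (k + 1)
  have hle : ((k + 1 : ℝ) ^ 2)⁻¹ ≤ 1 := inv_le_one_of_one_le₀ (one_le_pow₀ (by simp))
  rw [norm_pow, norm_div, norm_pow, norm_pow, hk, div_eq_mul_inv, mul_pow]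
  gcongr
  exact pow_le_of_le_one (by positivity) hle n.succ_ne_zero

theorem hasSum_div_pow_succ {K : Type*} [NormedField K] {a b : K} (hab : ‖a‖ < ‖b‖) :
    HasSum (fun n : ℕ ↦ (a / b) ^ (n + 1)) (a / (b - a)) := by
  have hb : b ≠ 0 := norm_pos_iff.mp ((norm_nonneg a).trans_lt hab)
  have hlt : ‖a / b‖ < 1 := by
    rw [norm_div]
    exact (div_lt_one (norm_pos_iff.mpr hb)).mpr hab
  have hsum : a / b * (1 - a / b)⁻¹ = a / (b - a) := by
    rw [one_sub_div hb, inv_div, div_mul_div_cancel₀ hb]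
  rw [← hsum]
  exact ((hasSum_geometric_of_norm_lt_one hlt).mul_left _).congr_fun fun n ↦ pow_succ' _ n

theorem hasSum_riemannZeta_two_mul_mul_pow {z : ℂ} (hz0 : z ≠ 0) (hz : ‖z‖ < 1) :
    HasSum (fun n : ℕ ↦ riemannZeta (2 * n) * z ^ (2 * n))
      (-(π * z * Complex.cot (π * z)) / 2) := by
  have hs := summable_sq_div_sq_pow hz
  have hzeta (n : ℕ) : HasSum (fun k : ℕ ↦ (z ^ 2 / ((k : ℂ) + 1) ^ 2) ^ (n + 1))
      (riemannZeta (2 * (n + 1 : ℕ)) * z ^ (2 * (n + 1))) := by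
    have h := (hasSum_one_div_nat_add_one_pow (s := 2 * (n + 1)) (by lia)).mul_right
      (z ^ (2 * (n + 1)))
    push_cast at h ⊢
    refine h.congr_fun fun k ↦ ?_
    rw [div_pow, ← pow_mul, ← pow_mul, one_div_mul_eq_div]
  have hgeom (k : ℕ) : HasSum (fun n : ℕ ↦ (z ^ 2 / ((k : ℂ) + 1) ^ 2) ^ (n + 1))
      (z ^ 2 / ((k + 1) ^ 2 - z ^ 2)) := by
    have hk : 1 ≤ ‖(k : ℂ) + 1‖ := by
      rw [← Nat.cast_add_one, Complex.norm_natCast]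
      exact Nat.one_le_cast.mpr k.succ_pos
    refine hasSum_div_pow_succ ?_
    rw [norm_pow, norm_pow]
    exact pow_lt_pow_left₀ (hz.trans_le hk) (norm_nonneg z) two_ne_zero
  have hswap : ∑' p : ℕ × ℕ, (z ^ 2 / ((p.2 : ℂ) + 1) ^ 2) ^ (p.1 + 1) =
      (1 - π * z * Complex.cot (π * z)) / 2 := by
    rw [← tsum_sq_div_sq_sub_sq_eq_cot (mem_integerComplement_of_norm_lt_one hz0 hz),
      ← (Equiv.prodComm ℕ ℕ).tsum_eq]
    exact (hs.prod_symm.hasSum.prod_fiberwise hgeom).tsum_eq.symm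
  have h := hs.hasSum.prod_fiberwise hzeta
  rw [hswap] at h
  have hfull := (hasSum_nat_add_iff (f := fun n : ℕ ↦ riemannZeta (2 * n) * z ^ (2 * n)) 1).mp h
  rw [Finset.sum_range_one, Nat.cast_zero, mul_zero, riemannZeta_zero, mul_zero, pow_zero] at hfull
  rwa [show -(π * z * Complex.cot (π * z)) / 2 =
    (1 - π * z * Complex.cot (π * z)) / 2 + -1 / 2 * 1 by ring]

end ZetaGeneratingFunction

section TermwiseIntegration

theorem integral_one_sub_sq_mul_pow (n : ℕ) :
    ∫ u in (0 : ℝ)..1, (1 - u ^ 2 : ℂ) * u ^ n = 2 / ((n + 1) * (n + 3)) := by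
  have hsub (u : ℝ) : (1 - u ^ 2 : ℂ) * u ^ n = ((u ^ n - u ^ (n + 2) : ℝ) : ℂ) := by
    push_cast
    ring
  simp only [hsub, intervalIntegral.integral_ofReal]
  rw [intervalIntegral.integral_sub (by simp) (by simp), integral_pow, integral_pow]
  have h1 : (n + 1 : ℂ) ≠ 0 := by norm_cast
  have h3 : (n + 3 : ℂ) ≠ 0 := by norm_cast
  push_cast
  rw [add_assoc (n : ℂ) 2 1, show (2 + 1 : ℂ) = 3 by norm_num, one_pow, one_pow,
    zero_pow (Nat.succ_ne_zero n), zero_pow (Nat.succ_ne_zero (n + 2))]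
  field_simp
  ring

theorem hasSum_div_mul_of_hasSum_mul_pow {ι : Type*} [Countable ι] {a : ι → ℂ} {e : ι → ℕ}
    {F : ℝ → ℂ} (ha : Summable a)
    (hF : ∀ u ∈ Set.Ioc (0 : ℝ) 1, HasSum (fun i ↦ a i * u ^ e i) (F u)) :
    HasSum (fun i ↦ a i / ((e i + 1) * (e i + 3)))
      ((∫ u in (0 : ℝ)..1, (1 - u ^ 2 : ℂ) * F u) / 2) := by
  have hbound (i : ι) (u : ℝ) (hu : u ∈ Set.Ioc (0 : ℝ) 1) :
      ‖(1 - u ^ 2 : ℂ) * (a i * u ^ e i)‖ ≤ ‖a i‖ := by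
    have hsq : ‖(1 - u ^ 2 : ℂ)‖ ≤ 1 := by
      rw [← Complex.ofReal_pow, ← Complex.ofReal_one, ← Complex.ofReal_sub, Complex.norm_real,
        Real.norm_eq_abs, abs_le]
      constructor <;> nlinarith [hu.1, hu.2]
    have hpow : ‖(u : ℂ) ^ e i‖ ≤ 1 := by
      rw [norm_pow, Complex.norm_of_nonneg hu.1.le]
      exact pow_le_one₀ hu.1.le hu.2
    rw [norm_mul, norm_mul]
    exact (mul_le_of_le_one_left (by positivity) hsq).trans
      (mul_le_of_le_one_right (norm_nonneg _) hpow)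
  have hIoc : Set.uIoc (0 : ℝ) 1 = Set.Ioc 0 1 := Set.uIoc_of_le zero_le_one
  have h := intervalIntegral.hasSum_integral_of_dominated_convergence (μ := volume)
    (a := 0) (b := 1) (F := fun i (u : ℝ) ↦ (1 - u ^ 2 : ℂ) * (a i * u ^ e i))
    (f := fun u ↦ (1 - u ^ 2 : ℂ) * F u) (fun i _ ↦ ‖a i‖)
    (fun i ↦ (by fun_prop : Continuous _).aestronglyMeasurable)
    (fun i ↦ .of_forall fun u hu ↦ hbound i u (hIoc ▸ hu))
    (.of_forall fun _ _ ↦ ha.norm) intervalIntegrable_const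
    (.of_forall fun u hu ↦ (hF u (hIoc ▸ hu)).mul_left _)
  refine (h.div_const 2).congr_fun fun i ↦ ?_
  simp only [mul_left_comm _ (a i), intervalIntegral.integral_const_mul,
    integral_one_sub_sq_mul_pow]
  ring

theorem hasSum_riemannZeta_two_mul_mul_pow_div {x : ℝ} (hx0 : x ≠ 0) (hx1 : |x| < 1) :
    HasSum (fun n : ℕ ↦ riemannZeta (2 * n) * x ^ (2 * n) / ((2 * n + 1) * (2 * n + 3)))
      (sinZeta x 2 / (4 * π * x) + 3 * cosZeta x 3 / (8 * (π * x) ^ 2)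
        - 3 * sinZeta x 4 / (16 * (π * x) ^ 3)) := by
  have hxu (u : ℝ) (hu : u ∈ Set.Ioc (0 : ℝ) 1) :
      HasSum (fun n : ℕ ↦ riemannZeta (2 * n) * x ^ (2 * n) * u ^ (2 * n))
        (-(π * (x * u) * Complex.cot (π * (x * u))) / 2) := by
    have hne : (x * u : ℂ) ≠ 0 := mod_cast mul_ne_zero hx0 hu.1.ne'
    have hlt : ‖(x * u : ℂ)‖ < 1 := by
      rw [norm_mul, Complex.norm_of_nonneg hu.1.le, Complex.norm_real]
      exact (mul_le_of_le_one_right (abs_nonneg x) hu.2).trans_lt hx1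
    simpa only [mul_pow, mul_assoc] using hasSum_riemannZeta_two_mul_mul_pow hne hlt
  have ha : Summable fun n : ℕ ↦ riemannZeta (2 * n) * (x : ℂ) ^ (2 * n) := by
    simpa using (hxu 1 (by simp)).summable
  have h := hasSum_div_mul_of_hasSum_mul_pow ha hxu
  have hint : ∫ u in (0 : ℝ)..1,
      (1 - u ^ 2 : ℂ) * (-(π * (x * u) * Complex.cot (π * (x * u))) / 2) =
        -(π * x) / 2 * ∫ u in (0 : ℝ)..1, (u * (1 - u ^ 2) : ℂ) * Complex.cot (π * x * u) := by
    rw [← intervalIntegral.integral_const_mul]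
    congr 1 with u
    ring_nf
  rw [hint, integral_mul_one_sub_sq_mul_cot hx0 hx1] at h
  have hπx : (π * x : ℂ) ≠ 0 := mod_cast mul_ne_zero pi_ne_zero hx0
  convert! h using 1
  · push_cast
    rfl
  · rw [mul_assoc 4 (π : ℂ)]
    generalize (π * x : ℂ) = y at *
    field_simp
    ring

end TermwiseIntegration

section QuarterPoint

theorem complexCos_nat_mul_pi (n : ℕ) : Complex.cos (n * π) = (-1) ^ n :=
  mod_cast congrArg Complex.ofReal (cos_nat_mul_pi n)

theorem sinZeta_one_div_four {s : ℕ} (hs : 1 < s) :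
    sinZeta ((1 / 4 : ℝ) : UnitAddCircle) s = dirichletBeta s := by
  have h := hasSum_sin_div_pow (1 / 4) hs
  have hinj : Function.Injective fun n : ℕ ↦ 2 * n + 1 := fun m n h ↦ by simpa using h
  have hodd (n : ℕ) : Complex.sin (2 * (2 * n + 1 : ℕ) * (π * (1 / 4 : ℝ))) = (-1) ^ n := by
    rw [show 2 * ((2 * n + 1 : ℕ) : ℂ) * (π * (1 / 4 : ℝ)) = n * π + π / 2 by push_cast; ring,
      Complex.sin_add_pi_div_two, complexCos_nat_mul_pi]
  have heven (k : ℕ) (hk : k ∉ Set.range fun n : ℕ ↦ 2 * n + 1) :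
      Complex.sin (2 * k * (π * (1 / 4 : ℝ))) / k ^ s = 0 := by
    obtain ⟨n, rfl⟩ : Even k := by
      rw [← Nat.not_odd_iff_even]
      exact fun ⟨n, hn⟩ ↦ hk ⟨n, hn.symm⟩
    rw [show 2 * ((n + n : ℕ) : ℂ) * (π * (1 / 4 : ℝ)) = n * π by push_cast; ring,
      Complex.sin_nat_mul_pi, zero_div]
  have h' := ((hinj.hasSum_iff heven).mpr h).tsum_eq
  simp only [Function.comp_def, hodd] at h'
  rw [← h', dirichletBeta]
  push_cast
  rfl

theorem cosZeta_one_div_two {s : ℕ} (hs : 1 < s) :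
    cosZeta ((1 / 2 : ℝ) : UnitAddCircle) s = (2 / 2 ^ s - 1) * riemannZeta s := by
  have hζ := hasSum_one_div_nat_pow hs
  have heven : HasSum (fun n : ℕ ↦ (1 + (-1) ^ (2 * n)) / ((2 * n : ℕ) : ℂ) ^ s)
      (2 / 2 ^ s * riemannZeta s) :=
    (hζ.mul_left (2 / 2 ^ s)).congr_fun fun n ↦ by
      rw [pow_mul, neg_one_sq, one_pow, Nat.cast_mul, mul_pow, div_mul_div_comm, mul_one]
      norm_num
  have hodd : HasSum (fun n : ℕ ↦ (1 + (-1) ^ (2 * n + 1)) / ((2 * n + 1 : ℕ) : ℂ) ^ s) 0 := by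
    simp [pow_succ, pow_mul, hasSum_zero]
  have halt := (heven.even_add_odd (f := fun n : ℕ ↦ (1 + (-1) ^ n) / (n : ℂ) ^ s) hodd).sub hζ
  have hcos := hasSum_cos_div_pow (1 / 2) hs
  rw [add_zero, ← sub_one_mul] at halt
  refine hcos.unique (halt.congr_fun fun n ↦ ?_)
  rw [show 2 * (n : ℂ) * (π * (1 / 2 : ℝ)) = n * π by push_cast; ring, complexCos_nat_mul_pi]
  ring

theorem cosZeta_one_div_four {s : ℕ} (hs : 1 < s) :
    cosZeta ((1 / 4 : ℝ) : UnitAddCircle) s =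
      cosZeta ((1 / 2 : ℝ) : UnitAddCircle) s / 2 ^ s := by
  have heven : HasSum
      (fun n : ℕ ↦ Complex.cos (2 * (2 * n : ℕ) * (π * (1 / 4 : ℝ))) / ((2 * n : ℕ) : ℂ) ^ s)
      (cosZeta ((1 / 2 : ℝ) : UnitAddCircle) s / 2 ^ s) :=
    ((hasSum_cos_div_pow (1 / 2) hs).div_const (2 ^ s)).congr_fun fun n ↦ by
      rw [div_div, mul_comm _ (2 ^ s), ← mul_pow]
      push_cast
      ring_nf
  have hodd : HasSum (fun n : ℕ ↦
      Complex.cos (2 * (2 * n + 1 : ℕ) * (π * (1 / 4 : ℝ))) / ((2 * n + 1 : ℕ) : ℂ) ^ s) 0 := by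
    have hzero (n : ℕ) : Complex.cos (2 * (2 * n + 1 : ℕ) * (π * (1 / 4 : ℝ))) = 0 := by
      rw [show 2 * ((2 * n + 1 : ℕ) : ℂ) * (π * (1 / 4 : ℝ)) = n * π + π / 2 by push_cast; ring,
        Complex.cos_add_pi_div_two, Complex.sin_nat_mul_pi, neg_zero]
    simpa only [hzero, zero_div] using hasSum_zero
  have h := heven.even_add_odd
    (f := fun k : ℕ ↦ Complex.cos (2 * k * (π * (1 / 4 : ℝ))) / (k : ℂ) ^ s) hodd
  rw [add_zero] at h
  exact (hasSum_cos_div_pow (1 / 4) hs).unique h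

end QuarterPoint

theorem stmt16 :
    ∑' n : ℕ, riemannZeta (2 * n) / ((2 * n + 1) * (2 * n + 3) * 16 ^ n) =
      -9 * riemannZeta 3 / (16 * (π : ℂ) ^ 2) + (catalanConst : ℂ) / (π : ℂ) -
        12 * (dirichletBeta 4 : ℂ) / (π : ℂ) ^ 3 := by
  have hG : sinZeta ((1 / 4 : ℝ) : UnitAddCircle) 2 = catalanConst :=
    sinZeta_one_div_four (s := 2) one_lt_two
  have hβ : sinZeta ((1 / 4 : ℝ) : UnitAddCircle) 4 = dirichletBeta 4 :=
    sinZeta_one_div_four (s := 4) (by norm_num)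
  have hζ : cosZeta ((1 / 4 : ℝ) : UnitAddCircle) 3 = -3 / 32 * riemannZeta 3 := by
    have h := (cosZeta_one_div_four (s := 3) (by norm_num)).trans
      (congrArg (· / 2 ^ 3) (cosZeta_one_div_two (s := 3) (by norm_num)))
    push_cast at h
    rw [h]
    ring
  have h := hasSum_riemannZeta_two_mul_mul_pow_div (x := 1 / 4) (by norm_num)
    (by norm_num [abs_lt])
  rw [hG, hβ, hζ] at h
  have hterm (n : ℕ) : riemannZeta (2 * n) / ((2 * n + 1) * (2 * n + 3) * 16 ^ n) =
      riemannZeta (2 * n) * ((1 / 4 : ℝ) : ℂ) ^ (2 * n) / ((2 * n + 1) * (2 * n + 3)) := by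
    rw [pow_mul, show (((1 / 4 : ℝ) : ℂ) ^ 2) = 16⁻¹ by norm_num, inv_pow, ← div_eq_mul_inv,
      div_div, mul_comm (16 ^ n)]
  rw [tsum_congr hterm, h.tsum_eq]
  push_cast
  ring
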